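/- Let n ≥ 1 and δ ∈ (0, n]. Suppose f ∈ nL¹(ℝⁿ, H̃^δ_∞) is an nL¹-limit of continuous functions. Then limsup_{r→0⁺} (1/H̃^δ_∞(B(x,r))) ∫_{B(x,r)} |f(y) − f(x)| dH̃^δ_∞(y) = 0 for H̃^δ_∞-almost every x ∈ ℝⁿ. -/

import Mathlib

open MeasureTheory Set Metric Filter Topology
open scoped ENNReal

noncomputable section

/-- Euclidean space `ℝⁿ`. -/
abbrev En (n : ℕ) : Type := EuclideanSpace ℝ (Fin n)

/-- The half-open dyadic cube `2^k (m + [0,1)ⁿ)`, `k : ℤ`, `m : ℤⁿ`. -/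
def dyadicCube (n : ℕ) (k : ℤ) (m : Fin n → ℤ) : Set (En n) :=
  {x | ∀ i, (m i : ℝ) * 2 ^ k ≤ x i ∧ x i < ((m i : ℝ) + 1) * 2 ^ k}

/-- The `δ`-dimensional dyadic Hausdorff content `H̃^δ_∞`: the infimum of `Σ ℓ(Q_i)^δ`
over all countable collections of dyadic cubes whose union's interior covers `E`. -/
def dyadicContent (n : ℕ) (δ : ℝ) (E : Set (En n)) : ℝ≥0∞ :=
  ⨅ (c : ℕ → ℤ × (Fin n → ℤ))
    (_ : E ⊆ interior (⋃ i, dyadicCube n (c i).1 (c i).2)),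
    ∑' i, ENNReal.ofReal (((2 : ℝ) ^ (c i).1) ^ δ)

/-- The Choquet integral `∫_Ω f dH̃^δ_∞ := ∫_0^∞ H̃^δ_∞({x ∈ Ω : f x > t}) dt`
of a `[0,∞]`-valued function over `Ω ⊆ ℝⁿ`. -/
def choquetIntegral (n : ℕ) (δ : ℝ) (Ω : Set (En n)) (f : En n → ℝ≥0∞) : ℝ≥0∞ :=
  ∫⁻ t in Ioi (0 : ℝ), dyadicContent n δ {x | x ∈ Ω ∧ ENNReal.ofReal t < f x}

/-- The Choquet integral `∫_Ω |f| dH̃^δ_∞` of a real-valued function. -/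
def choquetIntegralAbs (n : ℕ) (δ : ℝ) (Ω : Set (En n)) (f : En n → ℝ) : ℝ≥0∞ :=
  choquetIntegral n δ Ω (fun x => ENNReal.ofReal |f x|)

/-- The Choquet integral `∫_Ω |f| dH̃^δ_∞` of an extended-real-valued function. -/
def choquetIntegralEAbs (n : ℕ) (δ : ℝ) (Ω : Set (En n)) (f : En n → EReal) : ℝ≥0∞ :=
  choquetIntegral n δ Ω (fun x => (f x).abs)

/-- The ball average `f^δ_{B(x,r)} := (1/H̃^δ_∞(B(x,r))) ∫_{B(x,r)} f dH̃^δ_∞`. -/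
def ballAvg (n : ℕ) (δ : ℝ) (f : En n → ℝ≥0∞) (x : En n) (r : ℝ) : ℝ≥0∞ :=
  choquetIntegral n δ (ball x r) f / dyadicContent n δ (ball x r)

/-- The Hausdorff-content centred maximal function `M^δ f(x)`. -/
def maximal (n : ℕ) (δ : ℝ) (f : En n → ℝ≥0∞) (x : En n) : ℝ≥0∞ :=
  ⨆ (r : ℝ) (_ : 0 < r), ballAvg n δ f x r

/-- `f^δ_*(x) := limsup_{r→0⁺} (1/H̃^δ_∞(B(x,r))) ∫_{B(x,r)} |f(y) − f(x)| dH̃^δ_∞(y)`. -/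
def lebDev (n : ℕ) (δ : ℝ) (f : En n → ℝ) (x : En n) : ℝ≥0∞ :=
  limsup (fun r : ℝ => choquetIntegralAbs n δ (ball x r) (fun y => f y - f x) /
    dyadicContent n δ (ball x r)) (𝓝[>] (0 : ℝ))

/-- `limsup_{r→0⁺} f^δ_{B(x,r)}` of the ball averages. -/
def limsupAvg (n : ℕ) (δ : ℝ) (f : En n → ℝ≥0∞) (x : En n) : ℝ≥0∞ :=
  limsup (fun r : ℝ => ballAvg n δ f x r) (𝓝[>] (0 : ℝ))

/-!
The heart of the matter is a weak-type bound `t H̃^δ_∞({M^δ g > t}) ≲ ∫ g dH̃^δ_∞` for the maximal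
function, although the Choquet integral is not additive and no measure lies behind it. A measure is
manufactured for each `g`: cover every superlevel set `{g > T 2^k}`, `k ≥ 0`, almost optimally by
dyadic cubes and put the mass `T 2^k ℓ(Q)^δ` at the corner of each cube `Q` used. The total mass is
at most a constant times `∫ g dH̃^δ_∞`. By Vitali's covering lemma and the doubling of `H̃^δ_∞` on
balls, it exceeds `T H̃^δ_∞(B)` on a fixed enlargement of a ball `B` centred at `x` only for `x` in
a set of small content. For every other `x`, a cube larger than a ball around `x` cannot meet it,
since that cube alone would carry too much mass. The cubes meeting the ball are then counted by the
measure, and the average of `g` over the ball is at most `2T`.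

Comparing `f` with `φ` through `f^δ_* ≤ 4 (M^δ|f - φ| + |f - φ| + φ^δ_*)`, where `φ^δ_* = 0` for
continuous `φ`, makes the content of `{f^δ_* > 8t}` arbitrarily small.
-/

lemma mem_dyadicCube_iff_floor {n : ℕ} {k : ℤ} {m : Fin n → ℤ} {x : En n} :
    x ∈ dyadicCube n k m ↔ ∀ i, ⌊x i / 2 ^ k⌋ = m i := by
  have hk : (0 : ℝ) < 2 ^ k := by positivity
  simp only [dyadicCube, mem_ofPred_eq, Int.floor_eq_iff, le_div_iff₀ hk, div_lt_iff₀ hk]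

/-- The lower corner `2^k m` of the dyadic cube `2^k (m + [0,1)ⁿ)`. -/
def dyadicCorner (n : ℕ) (k : ℤ) (m : Fin n → ℤ) : En n :=
  WithLp.toLp 2 fun i => (m i : ℝ) * 2 ^ k

lemma dist_dyadicCorner_le {n : ℕ} {k : ℤ} {m : Fin n → ℤ} {x : En n}
    (hx : x ∈ dyadicCube n k m) : dist x (dyadicCorner n k m) ≤ √n * 2 ^ k := by
  have hcoord (i : Fin n) : dist (x i) (dyadicCorner n k m i) ^ 2 ≤ ((2 : ℝ) ^ k) ^ 2 := by
    refine pow_le_pow_left₀ dist_nonneg ?_ 2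
    rw [dyadicCorner, Real.dist_eq, abs_le]
    constructor <;> linarith [(hx i).1, (hx i).2, zpow_pos (two_pos (α := ℝ)) k]
  calc dist x (dyadicCorner n k m)
      = √(∑ i, dist (x i) (dyadicCorner n k m i) ^ 2) := EuclideanSpace.dist_eq _ _
    _ ≤ √(n * ((2 : ℝ) ^ k) ^ 2) :=
        Real.sqrt_le_sqrt ((Finset.sum_le_sum fun i _ => hcoord i).trans_eq (by simp))
    _ = √n * 2 ^ k := by rw [Real.sqrt_mul n.cast_nonneg, Real.sqrt_sq (by positivity)]

lemma volume_dyadicCube (n : ℕ) (k : ℤ) (m : Fin n → ℤ) :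
    volume (dyadicCube n k m) = ENNReal.ofReal (2 ^ k) ^ n := by
  have hpre : dyadicCube n k m = WithLp.ofLp ⁻¹'
      pi univ fun i => Ico ((m i : ℝ) * 2 ^ k) (((m i : ℝ) + 1) * 2 ^ k) := by
    ext x
    simp only [dyadicCube, mem_ofPred_eq, mem_preimage, mem_univ_pi, mem_Ico]
  rw [hpre, (PiLp.volume_preserving_ofLp (Fin n)).measure_preimage
    (MeasurableSet.univ_pi fun _ => measurableSet_Ico).nullMeasurableSet, Real.volume_pi_Ico]
  simp [add_mul]

/-- The weight `ℓ(Q)^δ` of a dyadic cube `Q` of side length `ℓ(Q) = 2^k`. -/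
def dyadicWeight (δ : ℝ) (k : ℤ) : ℝ≥0∞ := ENNReal.ofReal (((2 : ℝ) ^ k) ^ δ)

lemma exists_dyadicWeight_le {δ : ℝ} (hδ : 0 < δ) {ε : ℝ≥0∞} (hε : ε ≠ 0) :
    ∃ k : ℤ, dyadicWeight δ k ≤ ε := by
  have hlim : Tendsto (fun N : ℕ => dyadicWeight δ (-(N : ℤ))) atTop (𝓝 0) := by
    have hpow : Tendsto (fun N : ℕ => ((2 : ℝ) ^ (-(N : ℤ)))) atTop (𝓝 0) := by
      simpa [Function.comp_def] using
        tendsto_inv_atTop_zero.comp (tendsto_pow_atTop_atTop_of_one_lt one_lt_two)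
    simpa [dyadicWeight, Real.zero_rpow hδ.ne'] using
      ENNReal.tendsto_ofReal (hpow.rpow_const (Or.inr hδ.le))
  obtain ⟨N, hN⟩ := (hlim.eventually (gt_mem_nhds (pos_iff_ne_zero.2 hε))).exists
  exact ⟨_, hN.le⟩

lemma dyadicWeight_rpow {δ : ℝ} (hδ : 0 < δ) (n : ℕ) (k : ℤ) :
    dyadicWeight δ k ^ (n / δ) = ENNReal.ofReal (2 ^ k) ^ n := by
  have hk : (0 : ℝ) < 2 ^ k := by positivity
  rw [dyadicWeight, ← ENNReal.ofReal_rpow_of_pos hk, ← ENNReal.rpow_mul,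
    mul_div_cancel₀ _ hδ.ne', ENNReal.rpow_natCast]

lemma exists_cover_tsum_dyadicWeight_lt {n : ℕ} {δ : ℝ} {E : Set (En n)} {a : ℝ≥0∞}
    (h : dyadicContent n δ E < a) :
    ∃ c : ℕ → ℤ × (Fin n → ℤ), E ⊆ interior (⋃ i, dyadicCube n (c i).1 (c i).2) ∧
      ∑' i, dyadicWeight δ (c i).1 < a := by
  simpa only [dyadicContent, dyadicWeight, iInf_lt_iff, exists_prop] using h

lemma dyadicContent_mono {n : ℕ} {δ : ℝ} {E F : Set (En n)} (h : E ⊆ F) :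
    dyadicContent n δ E ≤ dyadicContent n δ F :=
  le_iInf₂ fun c hc => iInf₂_le c (h.trans hc)

lemma dyadicContent_le_tsum {n : ℕ} {δ : ℝ} (hδ : 0 < δ) {ι : Type*} [Countable ι]
    {c : ι → ℤ × (Fin n → ℤ)} {E : Set (En n)}
    (hE : E ⊆ interior (⋃ i, dyadicCube n (c i).1 (c i).2)) :
    dyadicContent n δ E ≤ ∑' i, dyadicWeight δ (c i).1 := by
  refine ENNReal.le_of_forall_pos_le_add fun ε hε _ => ?_
  obtain ⟨η, hη, hηsum⟩ := ENNReal.exists_pos_sum_of_countable (ENNReal.coe_ne_zero.2 hε.ne') ℕ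
  choose k hk using fun j => exists_dyadicWeight_le hδ (ENNReal.coe_ne_zero.2 (hη j).ne')
  -- Infinitely many cubes of small total weight turn the cover into one indexed by `ℕ`.
  let d : ι ⊕ ℕ → ℤ × (Fin n → ℤ) := Sum.elim c fun j => (k j, 0)
  obtain ⟨_⟩ := nonempty_denumerable (ι ⊕ ℕ)
  let e : ι ⊕ ℕ ≃ ℕ := Denumerable.eqv _
  have hcover : E ⊆ interior (⋃ j, dyadicCube n (d (e.symm j)).1 (d (e.symm j)).2) :=
    hE.trans <| interior_mono <| iUnion_subset fun i =>
      subset_iUnion_of_subset (e (Sum.inl i)) (by simp [d])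
  calc dyadicContent n δ E
      ≤ ∑' j, dyadicWeight δ (d (e.symm j)).1 :=
        iInf₂_le (fun j => d (e.symm j)) hcover
    _ = ∑' i, dyadicWeight δ (c i).1 + ∑' j, dyadicWeight δ (k j) := by
        rw [e.symm.tsum_eq fun s => dyadicWeight δ (d s).1,
          Summable.tsum_sum ENNReal.summable ENNReal.summable]
        rfl
    _ ≤ ∑' i, dyadicWeight δ (c i).1 + ε := by
        gcongr
        exact (ENNReal.tsum_le_tsum hk).trans hηsum.le

lemma dyadicContent_iUnion_le {n : ℕ} {δ : ℝ} (hδ : 0 < δ) (E : ℕ → Set (En n)) :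
    dyadicContent n δ (⋃ i, E i) ≤ ∑' i, dyadicContent n δ (E i) := by
  refine ENNReal.le_of_forall_pos_le_add fun ε hε hfin => ?_
  obtain ⟨η, hη, hηsum⟩ := ENNReal.exists_pos_sum_of_countable (ENNReal.coe_ne_zero.2 hε.ne') ℕ
  have hlt (i : ℕ) : dyadicContent n δ (E i) < dyadicContent n δ (E i) + η i :=
    ENNReal.lt_add_right (ENNReal.ne_top_of_tsum_ne_top hfin.ne i)
      (ENNReal.coe_ne_zero.2 (hη i).ne')
  choose c hcover hsum using fun i => exists_cover_tsum_dyadicWeight_lt (hlt i)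
  have hunion : (⋃ i, E i) ⊆
      interior (⋃ p : ℕ × ℕ, dyadicCube n (c p.1 p.2).1 (c p.1 p.2).2) :=
    iUnion_subset fun i => (hcover i).trans <| interior_mono <|
      iUnion_subset fun j => subset_iUnion_of_subset (i, j) subset_rfl
  calc dyadicContent n δ (⋃ i, E i)
      ≤ ∑' p : ℕ × ℕ, dyadicWeight δ (c p.1 p.2).1 := dyadicContent_le_tsum hδ hunion
    _ = ∑' i, ∑' j, dyadicWeight δ (c i j).1 := ENNReal.tsum_prod'
    _ ≤ ∑' i, (dyadicContent n δ (E i) + η i) := ENNReal.tsum_le_tsum fun i => (hsum i).le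
    _ = ∑' i, dyadicContent n δ (E i) + ∑' i, (η i : ℝ≥0∞) := ENNReal.tsum_add
    _ ≤ ∑' i, dyadicContent n δ (E i) + ε := by gcongr

lemma dyadicContent_empty {n : ℕ} {δ : ℝ} (hδ : 0 < δ) : dyadicContent n δ ∅ = 0 := by
  simpa using dyadicContent_le_tsum hδ (c := fun i : Empty => i.elim) (empty_subset _)

/-- The dyadic content `H̃^δ_∞` bundled as an outer measure, so that Mathlib's lemmas on countable
subadditivity and null sets apply to it. -/
def dyadicOuterMeasure (n : ℕ) {δ : ℝ} (hδ : 0 < δ) : OuterMeasure (En n) where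
  measureOf := dyadicContent n δ
  empty := dyadicContent_empty hδ
  mono := dyadicContent_mono
  iUnion_nat E _ := dyadicContent_iUnion_le hδ E

lemma tsum_rpow_le_rpow_tsum {ι : Type*} (a : ι → ℝ≥0∞) {p : ℝ} (hp : 1 ≤ p) :
    ∑' i, a i ^ p ≤ (∑' i, a i) ^ p := by
  have hsplit (b : ℝ≥0∞) : b ^ p = b * b ^ (p - 1) := by
    simpa using ENNReal.rpow_add_of_nonneg (x := b) 1 (p - 1) zero_le_one (sub_nonneg.2 hp)
  calc ∑' i, a i ^ p = ∑' i, a i * a i ^ (p - 1) := tsum_congr fun i => hsplit (a i)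
    _ ≤ ∑' i, a i * (∑' j, a j) ^ (p - 1) := by
        gcongr with i
        exact ENNReal.le_tsum i
    _ = (∑' i, a i) ^ p := by rw [ENNReal.tsum_mul_right, hsplit]

lemma volume_le_dyadicContent_rpow {n : ℕ} {δ : ℝ} (hδ : 0 < δ) (hδn : δ ≤ n) (E : Set (En n)) :
    volume E ≤ dyadicContent n δ E ^ (n / δ) := by
  have hp : 1 ≤ n / δ := (one_le_div hδ).2 hδn
  have hp0 : 0 < n / δ := zero_lt_one.trans_le hp
  rw [← ENNReal.rpow_inv_le_iff hp0]
  refine le_iInf₂ fun c hc => (ENNReal.rpow_inv_le_iff hp0).2 ?_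
  calc volume E ≤ volume (⋃ i, dyadicCube n (c i).1 (c i).2) :=
        measure_mono (hc.trans interior_subset)
    _ ≤ ∑' i, volume (dyadicCube n (c i).1 (c i).2) := measure_iUnion_le _
    _ = ∑' i, dyadicWeight δ (c i).1 ^ (n / δ) := by
        simp only [volume_dyadicCube, dyadicWeight_rpow hδ]
    _ ≤ (∑' i, dyadicWeight δ (c i).1) ^ (n / δ) := tsum_rpow_le_rpow_tsum _ hp

/-- The indices of the `3ⁿ` dyadic cubes that touch the dyadic cube of index `m` and have the same
side length. -/
def dyadicNeighbors {n : ℕ} (m : Fin n → ℤ) : Finset (Fin n → ℤ) :=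
  Fintype.piFinset fun i => Finset.Icc (m i - 1) (m i + 1)

lemma card_dyadicNeighbors {n : ℕ} (m : Fin n → ℤ) : (dyadicNeighbors m).card = 3 ^ n := by
  have hthree (a : ℤ) : (Finset.Icc (a - 1) (a + 1)).card = 3 := by
    rw [Int.card_Icc]
    lia
  simp only [dyadicNeighbors, Fintype.card_piFinset, hthree, Finset.prod_const, Finset.card_univ,
    Fintype.card_fin]

lemma thickening_dyadicCube_subset (n : ℕ) (k : ℤ) (m : Fin n → ℤ) :
    thickening (2 ^ k) (dyadicCube n k m) ⊆ ⋃ m' : dyadicNeighbors m, dyadicCube n k m' := by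
  intro y hy
  obtain ⟨x, hx, hxy⟩ := mem_thickening_iff.1 hy
  refine mem_iUnion.2 ⟨⟨fun i => ⌊y i / 2 ^ k⌋, ?_⟩, mem_dyadicCube_iff_floor.2 fun _ => rfl⟩
  refine Fintype.mem_piFinset.2 fun i => Finset.mem_Icc.2 ?_
  have hk : (0 : ℝ) < 2 ^ k := by positivity
  have hcoord : |y i / 2 ^ k - x i / 2 ^ k| < 1 := by
    rw [← sub_div, abs_div, abs_of_pos hk, div_lt_one hk, ← Real.norm_eq_abs]
    exact (PiLp.norm_apply_le (y - x) i).trans_lt (mem_ball_iff_norm.1 hxy)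
  obtain ⟨hlo, hhi⟩ := abs_lt.1 hcoord
  rw [← mem_dyadicCube_iff_floor.1 hx i]
  constructor
  · rw [← Int.floor_sub_one]
    exact Int.floor_le_floor (by linarith)
  · rw [← Int.floor_add_one]
    exact Int.floor_le_floor (by linarith)

lemma dyadicContent_thickening_dyadicCube_le {n : ℕ} {δ : ℝ} (hδ : 0 < δ) (k : ℤ)
    (m : Fin n → ℤ) :
    dyadicContent n δ (thickening (2 ^ k) (dyadicCube n k m)) ≤ 3 ^ n * dyadicWeight δ k := by
  calc dyadicContent n δ (thickening (2 ^ k) (dyadicCube n k m))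
      ≤ ∑' _ : dyadicNeighbors m, dyadicWeight δ k :=
        dyadicContent_le_tsum hδ (c := fun m' : dyadicNeighbors m => (k, m'.1)) <|
          interior_maximal (thickening_dyadicCube_subset n k m) isOpen_thickening
    _ = 3 ^ n * dyadicWeight δ k := by
        rw [tsum_fintype, Finset.sum_const, Finset.card_univ, Fintype.card_coe,
          card_dyadicNeighbors, nsmul_eq_mul, Nat.cast_pow, Nat.cast_ofNat]

lemma dyadicContent_dyadicCube_le {n : ℕ} {δ : ℝ} (hδ : 0 < δ) (k : ℤ) (m : Fin n → ℤ) :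
    dyadicContent n δ (dyadicCube n k m) ≤ 3 ^ n * dyadicWeight δ k :=
  (dyadicContent_mono (self_subset_thickening (by positivity) _)).trans
    (dyadicContent_thickening_dyadicCube_le hδ k m)

lemma dyadicContent_ball_zpow_le {n : ℕ} {δ : ℝ} (hδ : 0 < δ) (x : En n) (k : ℤ) :
    dyadicContent n δ (ball x (2 ^ k)) ≤ 3 ^ n * dyadicWeight δ k :=
  (dyadicContent_mono (ball_subset_thickening (mem_dyadicCube_iff_floor.2 fun _ => rfl) _)).trans
    (dyadicContent_thickening_dyadicCube_le hδ k fun i => ⌊x i / 2 ^ k⌋)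

lemma dyadicContent_closedBall_le {n : ℕ} {δ : ℝ} (hδ : 0 < δ) (x : En n) {r : ℝ} (hr : 0 < r) :
    dyadicContent n δ (closedBall x r) ≤ 3 ^ n * ENNReal.ofReal ((2 * r) ^ δ) := by
  obtain ⟨k, hkr, hrk⟩ := exists_mem_Ico_zpow hr one_lt_two
  calc dyadicContent n δ (closedBall x r)
      ≤ dyadicContent n δ (ball x (2 ^ (k + 1))) := dyadicContent_mono (closedBall_subset_ball hrk)
    _ ≤ 3 ^ n * dyadicWeight δ (k + 1) := dyadicContent_ball_zpow_le hδ x (k + 1)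
    _ ≤ 3 ^ n * ENNReal.ofReal ((2 * r) ^ δ) := by
        rw [dyadicWeight, zpow_add_one₀ two_ne_zero, mul_comm ((2 : ℝ) ^ k)]
        gcongr

lemma exists_dyadicContent_closedBall_le {n : ℕ} {δ : ℝ} (hδ : 0 < δ) {Λ : ℝ} (hΛ : 0 < Λ) :
    ∃ C : ℝ≥0∞, C ≠ ⊤ ∧ ∀ (x : En n) (r : ℝ), 0 < r →
      dyadicContent n δ (closedBall x (Λ * r)) ≤ C * ENNReal.ofReal (r ^ δ) := by
  refine ⟨3 ^ n * ENNReal.ofReal ((2 * Λ) ^ δ), by finiteness, fun x r hr => ?_⟩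
  calc dyadicContent n δ (closedBall x (Λ * r))
      ≤ 3 ^ n * ENNReal.ofReal ((2 * (Λ * r)) ^ δ) :=
        dyadicContent_closedBall_le hδ x (by positivity)
    _ = 3 ^ n * ENNReal.ofReal ((2 * Λ) ^ δ) * ENNReal.ofReal (r ^ δ) := by
        rw [mul_assoc, ← ENNReal.ofReal_mul (by positivity),
          ← Real.mul_rpow (by positivity) hr.le, mul_assoc]

lemma exists_ofReal_rpow_le_dyadicContent_ball {n : ℕ} {δ : ℝ} (hδ : 0 < δ) (hδn : δ ≤ n) :
    ∃ C : ℝ≥0∞, C ≠ ⊤ ∧ ∀ (x : En n) (r : ℝ), 0 < r →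
      ENNReal.ofReal (r ^ δ) ≤ C * dyadicContent n δ (ball x r) := by
  have hp : 0 < n / δ := div_pos (hδ.trans_le hδn) hδ
  set v : ℝ≥0∞ := volume (ball (0 : En n) 1) ^ (n / δ)⁻¹
  have hv0 : v ≠ 0 := (ENNReal.rpow_pos (measure_ball_pos _ _ one_pos) measure_ball_lt_top.ne).ne'
  have hvtop : v ≠ ⊤ := ENNReal.rpow_ne_top_of_nonneg (inv_nonneg.2 hp.le) measure_ball_lt_top.ne
  refine ⟨v⁻¹, ENNReal.inv_ne_top.2 hv0, fun x r hr => ?_⟩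
  have hvol : (ENNReal.ofReal (r ^ δ) * v) ^ (n / δ) = volume (ball x r) := by
    rw [ENNReal.mul_rpow_of_nonneg _ _ hp.le, ENNReal.rpow_inv_rpow hp.ne',
      Measure.addHaar_ball_of_pos volume x hr, finrank_euclideanSpace_fin,
      ENNReal.ofReal_rpow_of_pos (by positivity), ← Real.rpow_mul hr.le,
      mul_div_cancel₀ _ hδ.ne', Real.rpow_natCast]
  have hmul : ENNReal.ofReal (r ^ δ) * v ≤ dyadicContent n δ (ball x r) := by
    rw [← ENNReal.rpow_le_rpow_iff hp, hvol]
    exact volume_le_dyadicContent_rpow hδ hδn _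
  rwa [mul_comm, ← div_eq_mul_inv, ENNReal.le_div_iff_mul_le (Or.inl hv0) (Or.inl hvtop)]

lemma exists_dyadicContent_closedBall_le_ball {n : ℕ} {δ : ℝ} (hδ : 0 < δ) (hδn : δ ≤ n)
    {Λ : ℝ} (hΛ : 0 < Λ) :
    ∃ C : ℝ≥0∞, C ≠ ⊤ ∧ ∀ (x : En n) (r : ℝ), 0 < r →
      dyadicContent n δ (closedBall x (Λ * r)) ≤ C * dyadicContent n δ (ball x r) := by
  obtain ⟨C₁, hC₁, hupper⟩ := exists_dyadicContent_closedBall_le (n := n) hδ hΛ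
  obtain ⟨C₂, hC₂, hlower⟩ := exists_ofReal_rpow_le_dyadicContent_ball hδ hδn
  refine ⟨C₁ * C₂, by finiteness, fun x r hr => (hupper x r hr).trans ?_⟩
  rw [mul_assoc]
  gcongr
  exact hlower x r hr

lemma exists_mem_Ico_mul_two_pow {T t : ℝ} (hT : 0 < T) (ht : T ≤ t) :
    ∃ k : ℕ, t ∈ Ico (T * 2 ^ k) (T * 2 ^ (k + 1)) := by
  obtain ⟨k, hlo, hhi⟩ := exists_nat_pow_near ((one_le_div hT).2 ht) one_lt_two
  exact ⟨k, by rwa [le_div_iff₀' hT] at hlo, by rwa [div_lt_iff₀' hT] at hhi⟩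

lemma lintegral_Ioi_le_tsum_of_antitoneOn {h : ℝ → ℝ≥0∞} {T : ℝ} (hT : 0 < T)
    (hh : AntitoneOn h (Ici T)) :
    ∫⁻ t in Ioi T, h t ≤ ∑' k : ℕ, ENNReal.ofReal (T * 2 ^ k) * h (T * 2 ^ k) := by
  have hsub : Ioi T ⊆ ⋃ k : ℕ, Ico (T * 2 ^ k) (T * 2 ^ (k + 1)) := fun t ht =>
    mem_iUnion.2 (exists_mem_Ico_mul_two_pow hT (le_of_lt ht))
  have hT_le (k : ℕ) : T ≤ T * 2 ^ k := le_mul_of_one_le_right hT.le (one_le_pow₀ one_le_two)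
  refine (lintegral_mono_set hsub).trans <|
    (lintegral_iUnion_le _ _).trans (ENNReal.tsum_le_tsum fun k => ?_)
  calc ∫⁻ t in Ico (T * 2 ^ k) (T * 2 ^ (k + 1)), h t
      ≤ ∫⁻ _ in Ico (T * 2 ^ k) (T * 2 ^ (k + 1)), h (T * 2 ^ k) :=
        setLIntegral_mono' measurableSet_Ico fun t ht => hh (hT_le k) ((hT_le k).trans ht.1) ht.1
    _ = ENNReal.ofReal (T * 2 ^ k) * h (T * 2 ^ k) := by
        rw [setLIntegral_const, Real.volume_Ico, mul_comm, pow_succ, ← mul_assoc, mul_two,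
          add_sub_cancel_left]

lemma tsum_le_two_mul_lintegral_Ioi_of_antitoneOn {h : ℝ → ℝ≥0∞} (hh : AntitoneOn h (Ioi 0))
    {T : ℝ} (hT : 0 < T) :
    ∑' k : ℕ, ENNReal.ofReal (T * 2 ^ k) * h (T * 2 ^ k) ≤ 2 * ∫⁻ t in Ioi 0, h t := by
  let b : ℕ → ℝ := fun k => T / 2 * 2 ^ k
  have hb : Monotone b := fun i j hij => by dsimp only [b]; gcongr; exact one_le_two
  have hb_pos (k : ℕ) : 0 < b k := by positivity
  have hb_succ (k : ℕ) : b (k + 1) = T * 2 ^ k := by dsimp only [b]; ring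
  have hterm (k : ℕ) :
      ENNReal.ofReal (b (k + 1)) * h (b (k + 1)) ≤ 2 * ∫⁻ t in Ioc (b k) (b (k + 1)), h t := by
    calc ENNReal.ofReal (b (k + 1)) * h (b (k + 1))
        = 2 * ∫⁻ _ in Ioc (b k) (b (k + 1)), h (b (k + 1)) := by
          rw [setLIntegral_const, Real.volume_Ioc, mul_left_comm, mul_comm,
            ← ENNReal.ofReal_ofNat 2, ← ENNReal.ofReal_mul zero_le_two]
          congr 2
          dsimp only [b]
          ring
      _ ≤ 2 * ∫⁻ t in Ioc (b k) (b (k + 1)), h t := by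
          gcongr 2 * ?_
          exact setLIntegral_mono' measurableSet_Ioc fun t ht =>
            hh ((hb_pos k).trans ht.1) (hb_pos (k + 1)) ht.2
  simp only [← hb_succ]
  calc ∑' k, ENNReal.ofReal (b (k + 1)) * h (b (k + 1))
      ≤ ∑' k, 2 * ∫⁻ t in Ioc (b k) (b (k + 1)), h t := ENNReal.tsum_le_tsum hterm
    _ = 2 * ∫⁻ t in ⋃ k, Ioc (b k) (b (k + 1)), h t := by
        rw [ENNReal.tsum_mul_left, lintegral_iUnion fun _ => measurableSet_Ioc]
        exact hb.pairwise_disjoint_on_Ioc_succ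
    _ ≤ 2 * ∫⁻ t in Ioi 0, h t := by
        gcongr
        exact iUnion_subset fun k t ht => (hb_pos k).trans ht.1

lemma ofReal_mul_le_lintegral_Ioi_of_antitoneOn {h : ℝ → ℝ≥0∞} (hh : AntitoneOn h (Ioi 0))
    {T : ℝ} (hT : 0 < T) : ENNReal.ofReal T * h T ≤ ∫⁻ t in Ioi 0, h t := by
  calc ENNReal.ofReal T * h T = ∫⁻ _ in Ioc 0 T, h T := by
        rw [setLIntegral_const, Real.volume_Ioc, sub_zero, mul_comm]
    _ ≤ ∫⁻ t in Ioc 0 T, h t :=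
        setLIntegral_mono' measurableSet_Ioc fun t ht => hh ht.1 hT ht.2
    _ ≤ ∫⁻ t in Ioi 0, h t := lintegral_mono_set Ioc_subset_Ioi_self

lemma lintegral_Ioi_comp_mul_left (h : ℝ → ℝ≥0∞) {a : ℝ} (ha : 0 < a) :
    ∫⁻ t in Ioi 0, h (a * t) = ENNReal.ofReal a⁻¹ * ∫⁻ t in Ioi 0, h t := by
  have hemb : MeasurableEmbedding fun t : ℝ => a * t := measurableEmbedding_mulLeft₀ ha.ne'
  have hpre : (fun t : ℝ => a * t) ⁻¹' Ioi 0 = Ioi 0 := by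
    ext t
    simp [ha]
  calc ∫⁻ t in Ioi 0, h (a * t)
      = ∫⁻ t in Ioi 0, h t ∂(volume.map fun t : ℝ => a * t) := by
        rw [hemb.restrict_map, hemb.lintegral_map, hpre]
    _ = ENNReal.ofReal a⁻¹ * ∫⁻ t in Ioi 0, h t := by
        rw [Real.map_volume_mul_left ha.ne', abs_of_pos (inv_pos.2 ha), Measure.restrict_smul,
          lintegral_smul_measure, smul_eq_mul]

/-- The distribution function `t ↦ H̃^δ_∞({x ∈ Ω : f x > t})`, whose integral over `(0, ∞)` is the
Choquet integral of `f` over `Ω`. -/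
def dyadicDistribution (n : ℕ) (δ : ℝ) (Ω : Set (En n)) (f : En n → ℝ≥0∞) (t : ℝ) : ℝ≥0∞ :=
  dyadicContent n δ {x | x ∈ Ω ∧ ENNReal.ofReal t < f x}

section Choquet

variable {n : ℕ} {δ : ℝ} {Ω : Set (En n)} {f g : En n → ℝ≥0∞}

lemma antitone_dyadicDistribution : Antitone (dyadicDistribution n δ Ω f) :=
  fun _ _ hst => dyadicContent_mono fun _ hx =>
    ⟨hx.1, (ENNReal.ofReal_le_ofReal hst).trans_lt hx.2⟩

lemma dyadicDistribution_le (t : ℝ) : dyadicDistribution n δ Ω f t ≤ dyadicContent n δ Ω :=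
  dyadicContent_mono fun _ hx => hx.1

lemma dyadicDistribution_add_le (hδ : 0 < δ) (t : ℝ) :
    dyadicDistribution n δ Ω (f + g) t ≤
      dyadicDistribution n δ Ω f (2⁻¹ * t) + dyadicDistribution n δ Ω g (2⁻¹ * t) := by
  refine (dyadicContent_mono ?_).trans (measure_union_le (μ := dyadicOuterMeasure n hδ) _ _)
  rintro x ⟨hx, hlt⟩
  by_contra hnot
  simp only [mem_union, mem_ofPred_eq, hx, true_and, not_or, not_lt] at hnot
  refine hlt.not_ge ((add_le_add hnot.1 hnot.2).trans_eq ?_)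
  rw [← two_mul, ENNReal.ofReal_mul (by positivity), ENNReal.ofReal_inv_of_pos two_pos,
    ENNReal.ofReal_ofNat, ENNReal.mul_inv_cancel_left two_ne_zero ENNReal.ofNat_ne_top]

lemma choquetIntegral_mono (hfg : f ≤ g) : choquetIntegral n δ Ω f ≤ choquetIntegral n δ Ω g :=
  lintegral_mono fun _ => dyadicContent_mono fun x hx => ⟨hx.1, hx.2.trans_le (hfg x)⟩

lemma choquetIntegral_add_le (hδ : 0 < δ) :
    choquetIntegral n δ Ω (f + g) ≤
      2 * (choquetIntegral n δ Ω f + choquetIntegral n δ Ω g) := by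
  calc choquetIntegral n δ Ω (f + g)
      ≤ ∫⁻ t in Ioi (0 : ℝ),
          (dyadicDistribution n δ Ω f (2⁻¹ * t) + dyadicDistribution n δ Ω g (2⁻¹ * t)) :=
        lintegral_mono fun t => dyadicDistribution_add_le hδ t
    _ = (∫⁻ t in Ioi (0 : ℝ), dyadicDistribution n δ Ω f (2⁻¹ * t)) +
          ∫⁻ t in Ioi (0 : ℝ), dyadicDistribution n δ Ω g (2⁻¹ * t) :=
        lintegral_add_left
          (antitone_dyadicDistribution.measurable.comp (measurable_const_mul 2⁻¹)) _
    _ = 2 * (choquetIntegral n δ Ω f + choquetIntegral n δ Ω g) := by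
        rw [lintegral_Ioi_comp_mul_left _ (by positivity),
          lintegral_Ioi_comp_mul_left _ (by positivity), inv_inv, ENNReal.ofReal_ofNat, ← mul_add]
        rfl

lemma choquetIntegral_le_add_lintegral_Ioi {T : ℝ} (hT : 0 ≤ T) :
    choquetIntegral n δ Ω f ≤ ENNReal.ofReal T * dyadicContent n δ Ω +
      ∫⁻ t in Ioi T, dyadicDistribution n δ Ω f t := by
  rw [choquetIntegral, ← Ioc_union_Ioi_eq_Ioi hT]
  refine (lintegral_union_le _ _ _).trans (add_le_add_left ?_ _)
  calc ∫⁻ t in Ioc 0 T, dyadicDistribution n δ Ω f t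
      ≤ ∫⁻ _ in Ioc 0 T, dyadicContent n δ Ω := lintegral_mono dyadicDistribution_le
    _ = ENNReal.ofReal T * dyadicContent n δ Ω := by
        rw [setLIntegral_const, Real.volume_Ioc, sub_zero, mul_comm]

lemma choquetIntegral_le_mul_of_forall_le (hδ : 0 < δ) {T : ℝ} (hT : 0 ≤ T)
    (hf : ∀ x ∈ Ω, f x ≤ ENNReal.ofReal T) :
    choquetIntegral n δ Ω f ≤ ENNReal.ofReal T * dyadicContent n δ Ω := by
  have hzero : ∀ t ∈ Ioi T, dyadicDistribution n δ Ω f t = 0 := by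
    intro t ht
    have hempty : {x | x ∈ Ω ∧ ENNReal.ofReal t < f x} = ∅ :=
      eq_empty_of_forall_notMem fun x hx =>
        hx.2.not_ge ((hf x hx.1).trans (ENNReal.ofReal_le_ofReal (le_of_lt ht)))
    rw [dyadicDistribution, hempty, dyadicContent_empty hδ]
  simpa [setLIntegral_congr_fun measurableSet_Ioi hzero] using
    choquetIntegral_le_add_lintegral_Ioi (n := n) (δ := δ) (Ω := Ω) (f := f) hT

lemma ofReal_mul_dyadicDistribution_le {T : ℝ} (hT : 0 < T) :
    ENNReal.ofReal T * dyadicDistribution n δ Ω f T ≤ choquetIntegral n δ Ω f :=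
  ofReal_mul_le_lintegral_Ioi_of_antitoneOn (antitone_dyadicDistribution.antitoneOn _) hT

end Choquet

lemma exists_forall_le_of_mul_dyadicContent_ball_le {n : ℕ} {δ : ℝ} (hδ : 0 < δ) (hδn : δ ≤ n)
    {T M : ℝ≥0∞} (hT : T ≠ 0) (hM : M ≠ ⊤) :
    ∃ R : ℝ, ∀ (x : En n) (r : ℝ), 0 < r → T * dyadicContent n δ (ball x r) ≤ M → r ≤ R := by
  obtain ⟨C, hC, hlower⟩ := exists_ofReal_rpow_le_dyadicContent_ball hδ hδn
  have hbound : C * (M / T) ≠ ⊤ := ENNReal.mul_ne_top hC (ENNReal.div_ne_top hM hT)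
  refine ⟨(C * (M / T)).toReal ^ δ⁻¹, fun x r hr hxr => ?_⟩
  rw [Real.le_rpow_inv_iff_of_pos hr.le ENNReal.toReal_nonneg hδ,
    ← ENNReal.ofReal_le_iff_le_toReal hbound]
  refine (hlower x r hr).trans ?_
  gcongr
  exact ENNReal.le_div_iff_mul_le (Or.inl hT) (Or.inr hM) |>.2 (by rwa [mul_comm])

lemma exists_countable_pairwiseDisjoint_closedBall_cover {X : Type*} [PseudoMetricSpace X]
    [TopologicalSpace.SeparableSpace X] {V : Set X} {ρ : V → ℝ} (hρ : ∀ x, 0 < ρ x) {R : ℝ}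
    (hR : ∀ x, ρ x ≤ R) :
    ∃ u : Set V, u.Countable ∧ u.PairwiseDisjoint (fun x => closedBall (x : X) (ρ x)) ∧
      V ⊆ ⋃ b : u, closedBall (b : X) (5 * ρ b) := by
  obtain ⟨u, -, hdisj, hcover⟩ := Vitali.exists_disjoint_subfamily_covering_enlargement_closedBall
    univ (fun x : V => (x : X)) ρ R (fun x _ => hR x) 5 (by norm_num)
  refine ⟨u, hdisj.countable_of_nonempty_interior fun x _ =>
    ⟨x, ball_subset_interior_closedBall (mem_ball_self (hρ x))⟩, hdisj, fun x hx => ?_⟩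
  obtain ⟨b, hb, hsub⟩ := hcover ⟨x, hx⟩ (mem_univ _)
  exact mem_iUnion.2 ⟨⟨b, hb⟩, hsub (mem_closedBall_self (hρ _).le)⟩

lemma exists_mul_dyadicContent_le_measure_univ {n : ℕ} {δ : ℝ} (hδ : 0 < δ) (hδn : δ ≤ n)
    {Λ : ℝ} (hΛ : 0 < Λ) :
    ∃ C : ℝ≥0∞, C ≠ ⊤ ∧ ∀ (μ : Measure (En n)) [IsFiniteMeasure μ] (T : ℝ≥0∞),
      T * dyadicContent n δ
        {x | ∃ r, 0 < r ∧ T * dyadicContent n δ (ball x r) ≤ μ (closedBall x (Λ * r))} ≤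
      C * μ univ := by
  obtain ⟨C, hC, hdouble⟩ :=
    exists_dyadicContent_closedBall_le_ball hδ hδn (Λ := 5 * Λ) (by positivity)
  refine ⟨C, hC, fun μ _ T => ?_⟩
  rcases eq_or_ne T 0 with rfl | hT
  · simp only [zero_mul, zero_le]
  set V := {x | ∃ r, 0 < r ∧ T * dyadicContent n δ (ball x r) ≤ μ (closedBall x (Λ * r))}
  choose ρ hρ_pos hρ using fun x : V => x.2
  obtain ⟨R, hR⟩ :=
    exists_forall_le_of_mul_dyadicContent_ball_le hδ hδn hT (measure_ne_top μ univ)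
  obtain ⟨u, hu, hdisj, hV⟩ := exists_countable_pairwiseDisjoint_closedBall_cover
    (ρ := fun x => Λ * ρ x) (R := Λ * R) (fun x => mul_pos hΛ (hρ_pos x)) fun x => by
      gcongr
      exact hR x _ (hρ_pos x) ((hρ x).trans (measure_mono (subset_univ _)))
  have := hu.to_subtype
  simp only [← mul_assoc] at hV
  calc T * dyadicContent n δ V
      ≤ T * ∑' b : u, C * dyadicContent n δ (ball (b : En n) (ρ b)) := by
        gcongr
        refine (dyadicContent_mono hV).trans ?_
        refine (measure_iUnion_le (μ := dyadicOuterMeasure n hδ) _).trans ?_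
        exact ENNReal.tsum_le_tsum fun b => hdouble _ _ (hρ_pos b)
    _ = C * ∑' b : u, T * dyadicContent n δ (ball (b : En n) (ρ b)) := by
        rw [ENNReal.tsum_mul_left, ENNReal.tsum_mul_left, mul_left_comm]
    _ ≤ C * ∑' b : u, μ (closedBall (b : En n) (Λ * ρ b)) := by
        gcongr with b
        exact hρ b
    _ ≤ C * μ univ := by
        gcongr
        exact tsum_measure_le_measure_univ
          (fun b => isClosed_closedBall.measurableSet.nullMeasurableSet)
          fun b b' hbb' => (hdisj.subtype _ _ hbb').aedisjoint

/-- The measure that puts the mass `w i * ℓ(Q i)^δ` at the lower corner of each cube `Q i` of a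
family of dyadic cubes, the cube of index `c i = (k, m)` being `2^k (m + [0,1)ⁿ)`. -/
def cubeMass (n : ℕ) (δ : ℝ) {ι : Type*} (w : ι → ℝ≥0∞) (c : ι → ℤ × (Fin n → ℤ)) :
    Measure (En n) :=
  Measure.sum fun i =>
    (w i * dyadicWeight δ (c i).1) • Measure.dirac (dyadicCorner n (c i).1 (c i).2)

section CubeMass

variable {n : ℕ} {δ : ℝ} {ι : Type*} {w : ι → ℝ≥0∞} {c : ι → ℤ × (Fin n → ℤ)}

lemma cubeMass_apply {s : Set (En n)} (hs : MeasurableSet s) :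
    cubeMass n δ w c s =
      ∑' i, w i * dyadicWeight δ (c i).1 * s.indicator 1 (dyadicCorner n (c i).1 (c i).2) := by
  simp only [cubeMass, Measure.sum_apply _ hs, Measure.smul_apply, Measure.dirac_apply' _ hs,
    smul_eq_mul]

lemma cubeMass_univ : cubeMass n δ w c univ = ∑' i, w i * dyadicWeight δ (c i).1 := by
  simp only [cubeMass_apply MeasurableSet.univ, indicator_univ, Pi.one_apply, mul_one]

lemma le_cubeMass {s : Set (En n)} {i : ι} (hi : dyadicCorner n (c i).1 (c i).2 ∈ s) :
    w i * dyadicWeight δ (c i).1 ≤ cubeMass n δ w c s := by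
  refine le_trans (Eq.le ?_) (Measure.le_iff'.1 (Measure.le_sum _ i) s)
  rw [Measure.smul_apply, Measure.dirac_apply_of_mem hi, smul_eq_mul, mul_one]

lemma dyadicCorner_mem_closedBall {k : ℤ} {m : Fin n → ℤ} {x : En n} {r s : ℝ} (hr : r ≤ s)
    (hk : 2 ^ k ≤ s) (h : (ball x r ∩ dyadicCube n k m).Nonempty) :
    dyadicCorner n k m ∈ closedBall x ((1 + √n) * s) := by
  obtain ⟨y, hyx, hy⟩ := h
  rw [mem_closedBall']
  calc dist x (dyadicCorner n k m)
      ≤ dist x y + dist y (dyadicCorner n k m) := dist_triangle _ _ _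
    _ ≤ s + √n * s := by
        gcongr
        · exact (mem_ball'.1 hyx).le.trans hr
        · exact (dist_dyadicCorner_le hy).trans (by gcongr)
    _ = (1 + √n) * s := by ring

lemma tsum_mul_dyadicContent_inter_le_cubeMass (hδ : 0 < δ) {x : En n} {r : ℝ}
    (hsmall : ∀ i, (ball x r ∩ dyadicCube n (c i).1 (c i).2).Nonempty → 2 ^ (c i).1 ≤ r) :
    ∑' i, w i * dyadicContent n δ (ball x r ∩ dyadicCube n (c i).1 (c i).2) ≤
      3 ^ n * cubeMass n δ w c (closedBall x ((1 + √n) * r)) := by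
  rw [cubeMass_apply isClosed_closedBall.measurableSet, ← ENNReal.tsum_mul_left]
  refine ENNReal.tsum_le_tsum fun i => ?_
  rcases (ball x r ∩ dyadicCube n (c i).1 (c i).2).eq_empty_or_nonempty with hempty | hne
  · simp only [hempty, dyadicContent_empty hδ, mul_zero, zero_le]
  · rw [indicator_of_mem (dyadicCorner_mem_closedBall le_rfl (hsmall i hne) hne), Pi.one_apply,
      mul_one, mul_left_comm]
    gcongr
    exact (dyadicContent_mono inter_subset_right).trans (dyadicContent_dyadicCube_le hδ _ _)

end CubeMass

lemma exists_superlevel_cover {n : ℕ} {δ : ℝ} {g : En n → ℝ≥0∞} {T : ℝ} (hT : 0 < T) {M : ℝ≥0∞}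
    (hM : choquetIntegral n δ univ g < M) :
    ∃ c : ℕ × ℕ → ℤ × (Fin n → ℤ),
      (∀ k, {y | ENNReal.ofReal (T * 2 ^ k) < g y} ⊆
        ⋃ i, dyadicCube n (c (k, i)).1 (c (k, i)).2) ∧
      ∑' p, ENNReal.ofReal (T * 2 ^ p.1) * dyadicWeight δ (c p).1 ≤ 3 * M := by
  set D := dyadicDistribution n δ univ g
  have hlevel (k : ℕ) : 0 < T * 2 ^ k := by positivity
  have hw (k : ℕ) : ENNReal.ofReal (T * 2 ^ k) ≠ 0 := (ENNReal.ofReal_pos.2 (hlevel k)).ne'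
  have hD (k : ℕ) : D (T * 2 ^ k) ≠ ⊤ := fun htop => by
    have hcheb := (ofReal_mul_dyadicDistribution_le (hlevel k)).trans_lt (hM.trans_le le_top)
    exact hcheb.ne ((congrArg _ htop).trans (ENNReal.mul_top (hw k)))
  obtain ⟨ε, hε, hεsum⟩ := ENNReal.exists_pos_sum_of_countable (pos_of_gt hM).ne' ℕ
  have hlt (k : ℕ) :
      D (T * 2 ^ k) < D (T * 2 ^ k) + ε k / ENNReal.ofReal (T * 2 ^ k) :=
    ENNReal.lt_add_right (hD k)
      (ENNReal.div_pos (ENNReal.coe_ne_zero.2 (hε k).ne') ENNReal.ofReal_ne_top).ne'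
  choose c hcover hsum using fun k => exists_cover_tsum_dyadicWeight_lt (hlt k)
  refine ⟨fun p => c p.1 p.2, fun k y hy => interior_subset (hcover k ⟨mem_univ y, hy⟩), ?_⟩
  calc ∑' p : ℕ × ℕ, ENNReal.ofReal (T * 2 ^ p.1) * dyadicWeight δ (c p.1 p.2).1
      = ∑' k, ENNReal.ofReal (T * 2 ^ k) * ∑' i, dyadicWeight δ (c k i).1 := by
        simp only [ENNReal.tsum_prod', ENNReal.tsum_mul_left]
    _ ≤ ∑' k, (ENNReal.ofReal (T * 2 ^ k) * D (T * 2 ^ k) + ε k) := by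
        gcongr with k
        refine (mul_le_mul_right (hsum k).le _).trans_eq ?_
        rw [mul_add, ENNReal.mul_div_cancel (hw k) ENNReal.ofReal_ne_top]
    _ = ∑' k, ENNReal.ofReal (T * 2 ^ k) * D (T * 2 ^ k) + ∑' k, (ε k : ℝ≥0∞) := ENNReal.tsum_add
    _ ≤ 2 * choquetIntegral n δ univ g + M := by
        gcongr
        exact tsum_le_two_mul_lintegral_Ioi_of_antitoneOn
          (antitone_dyadicDistribution.antitoneOn _) hT
    _ ≤ 2 * M + M := by gcongr
    _ = 3 * M := by ring

lemma zpow_le_of_forall_cubeMass_lt {n : ℕ} {δ : ℝ} (hδ : 0 < δ) {ι : Type*} {w : ι → ℝ≥0∞}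
    {c : ι → ℤ × (Fin n → ℤ)} {T : ℝ≥0∞} {x : En n} {i : ι} (hw : T ≤ w i)
    (hx : ∀ r, 0 < r → 3 ^ n * cubeMass n δ w c (closedBall x ((1 + √n) * r)) <
      T * dyadicContent n δ (ball x r))
    {r : ℝ} (h : (ball x r ∩ dyadicCube n (c i).1 (c i).2).Nonempty) : 2 ^ (c i).1 ≤ r := by
  by_contra! hr
  refine (hx (2 ^ (c i).1) (by positivity)).not_ge ?_
  calc T * dyadicContent n δ (ball x (2 ^ (c i).1))
      ≤ w i * (3 ^ n * dyadicWeight δ (c i).1) := by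
        gcongr
        exact dyadicContent_ball_zpow_le hδ x _
    _ = 3 ^ n * (w i * dyadicWeight δ (c i).1) := mul_left_comm _ _ _
    _ ≤ 3 ^ n * cubeMass n δ w c (closedBall x ((1 + √n) * 2 ^ (c i).1)) := by
        gcongr
        exact le_cubeMass (dyadicCorner_mem_closedBall hr.le le_rfl h)

lemma choquetIntegral_ball_le_of_forall_cubeMass_lt {n : ℕ} {δ : ℝ} (hδ : 0 < δ)
    {g : En n → ℝ≥0∞} {T : ℝ} (hT : 0 < T) {c : ℕ × ℕ → ℤ × (Fin n → ℤ)}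
    (hcover : ∀ k, {y | ENNReal.ofReal (T * 2 ^ k) < g y} ⊆
      ⋃ i, dyadicCube n (c (k, i)).1 (c (k, i)).2) {x : En n}
    (hx : ∀ r, 0 < r → 3 ^ n *
      cubeMass n δ (fun p : ℕ × ℕ => ENNReal.ofReal (T * 2 ^ p.1)) c
        (closedBall x ((1 + √n) * r)) < ENNReal.ofReal T * dyadicContent n δ (ball x r))
    {r : ℝ} (hr : 0 < r) :
    choquetIntegral n δ (ball x r) g ≤ 2 * ENNReal.ofReal T * dyadicContent n δ (ball x r) := by
  set w : ℕ × ℕ → ℝ≥0∞ := fun p => ENNReal.ofReal (T * 2 ^ p.1)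
  set D := dyadicDistribution n δ (ball x r) g
  have hTw (p : ℕ × ℕ) : ENNReal.ofReal T ≤ w p :=
    ENNReal.ofReal_le_ofReal (le_mul_of_one_le_right hT.le (one_le_pow₀ one_le_two))
  have hD (k : ℕ) : D (T * 2 ^ k) ≤
      ∑' i, dyadicContent n δ (ball x r ∩ dyadicCube n (c (k, i)).1 (c (k, i)).2) := by
    refine (dyadicContent_mono ?_).trans (dyadicContent_iUnion_le hδ _)
    rw [← inter_iUnion]
    exact fun y hy => ⟨hy.1, hcover k hy.2⟩
  have htail : ∫⁻ t in Ioi T, D t ≤ ENNReal.ofReal T * dyadicContent n δ (ball x r) := by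
    calc ∫⁻ t in Ioi T, D t
        ≤ ∑' k : ℕ, ENNReal.ofReal (T * 2 ^ k) * D (T * 2 ^ k) :=
          lintegral_Ioi_le_tsum_of_antitoneOn hT (antitone_dyadicDistribution.antitoneOn _)
      _ ≤ ∑' k : ℕ, ENNReal.ofReal (T * 2 ^ k) *
            ∑' i, dyadicContent n δ (ball x r ∩ dyadicCube n (c (k, i)).1 (c (k, i)).2) := by
          gcongr with k
          exact hD k
      _ = ∑' p, w p * dyadicContent n δ (ball x r ∩ dyadicCube n (c p).1 (c p).2) := by
          simp only [ENNReal.tsum_prod', ENNReal.tsum_mul_left, w]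
      _ ≤ 3 ^ n * cubeMass n δ w c (closedBall x ((1 + √n) * r)) :=
          tsum_mul_dyadicContent_inter_le_cubeMass hδ fun p =>
            zpow_le_of_forall_cubeMass_lt hδ (hTw p) hx
      _ ≤ ENNReal.ofReal T * dyadicContent n δ (ball x r) := (hx r hr).le
  refine (choquetIntegral_le_add_lintegral_Ioi hT.le).trans ?_
  rw [two_mul, add_mul]
  gcongr

lemma exists_mul_dyadicContent_maximal_le {n : ℕ} {δ : ℝ} (hδ : 0 < δ) (hδn : δ ≤ n) :
    ∃ C : ℝ≥0∞, C ≠ ⊤ ∧ ∀ (g : En n → ℝ≥0∞) (t : ℝ), 0 < t → choquetIntegral n δ univ g ≠ ⊤ →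
      ENNReal.ofReal t * dyadicContent n δ {x | ENNReal.ofReal t < maximal n δ g x} ≤
        C * choquetIntegral n δ univ g := by
  obtain ⟨C, hC, hvitali⟩ :=
    exists_mul_dyadicContent_le_measure_univ hδ hδn (Λ := 1 + √n) (by positivity)
  refine ⟨2 * (C * (3 ^ n * 3)), by finiteness, fun g t ht hg => ?_⟩
  refine ENNReal.le_mul_of_forall_lt (Or.inr hg) (Or.inl (by finiteness)) fun a ha b hb => ?_
  obtain ⟨M, hM, hMb⟩ := exists_between hb
  obtain ⟨c, hcover, hsum⟩ := exists_superlevel_cover (half_pos ht) hM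
  set w : ℕ × ℕ → ℝ≥0∞ := fun p => ENNReal.ofReal (t / 2 * 2 ^ p.1)
  set μ : Measure (En n) := (3 ^ n : ℝ≥0∞) • cubeMass n δ w c
  have hμ : μ univ ≤ 3 ^ n * (3 * M) := by
    rw [Measure.smul_apply, cubeMass_univ, smul_eq_mul]
    gcongr
  have : IsFiniteMeasure μ := ⟨hμ.trans_lt (by finiteness [hMb.ne_top])⟩
  have ht2 : 2 * ENNReal.ofReal (t / 2) = ENNReal.ofReal t := by
    rw [← ENNReal.ofReal_ofNat 2, ← ENNReal.ofReal_mul zero_le_two, mul_div_cancel₀ _ two_ne_zero]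
  set V := {x | ∃ r, 0 < r ∧ ENNReal.ofReal (t / 2) * dyadicContent n δ (ball x r) ≤
    μ (closedBall x ((1 + √n) * r))}
  have hsub : {x | ENNReal.ofReal t < maximal n δ g x} ⊆ V := by
    rintro x (hx : ENNReal.ofReal t < maximal n δ g x)
    by_contra hgood
    refine hx.not_ge (iSup₂_le fun r hr => ENNReal.div_le_of_le_mul (ht2 ▸ ?_))
    exact choquetIntegral_ball_le_of_forall_cubeMass_lt hδ (half_pos ht) hcover
      (fun s hs => not_le.1 fun hle => hgood ⟨s, hs, hle⟩) hr
  calc ENNReal.ofReal t * dyadicContent n δ {x | ENNReal.ofReal t < maximal n δ g x}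
      ≤ ENNReal.ofReal t * dyadicContent n δ V := by
        gcongr
        exact dyadicContent_mono hsub
    _ = 2 * (ENNReal.ofReal (t / 2) * dyadicContent n δ V) := by rw [← ht2, mul_assoc]
    _ ≤ 2 * (C * μ univ) := by
        gcongr 2 * ?_
        exact hvitali μ _
    _ ≤ 2 * (C * (3 ^ n * (3 * M))) := by gcongr
    _ = 2 * (C * (3 ^ n * 3)) * M := by ring
    _ ≤ a * b := mul_le_mul' ha.le hMb.le

lemma ballAvg_le_maximal {n : ℕ} {δ : ℝ} (f : En n → ℝ≥0∞) (x : En n) {r : ℝ} (hr : 0 < r) :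
    ballAvg n δ f x r ≤ maximal n δ f x :=
  le_iSup₂ (f := fun r (_ : 0 < r) => ballAvg n δ f x r) r hr

lemma ballAvg_mono {n : ℕ} {δ : ℝ} {f g : En n → ℝ≥0∞} (hfg : f ≤ g) (x : En n) (r : ℝ) :
    ballAvg n δ f x r ≤ ballAvg n δ g x r :=
  ENNReal.div_le_div_right (choquetIntegral_mono hfg) _

lemma ballAvg_add_le {n : ℕ} {δ : ℝ} (hδ : 0 < δ) (f g : En n → ℝ≥0∞) (x : En n) (r : ℝ) :
    ballAvg n δ (f + g) x r ≤ 2 * (ballAvg n δ f x r + ballAvg n δ g x r) := by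
  simp only [ballAvg]
  rw [← ENNReal.add_div, ← mul_div_assoc]
  exact ENNReal.div_le_div_right (choquetIntegral_add_le hδ) _

lemma ballAvg_le_of_forall_le {n : ℕ} {δ : ℝ} (hδ : 0 < δ) {f : En n → ℝ≥0∞} {x : En n} {r c : ℝ}
    (hc : 0 ≤ c) (hf : ∀ y ∈ ball x r, f y ≤ ENNReal.ofReal c) :
    ballAvg n δ f x r ≤ ENNReal.ofReal c :=
  ENNReal.div_le_of_le_mul (choquetIntegral_le_mul_of_forall_le hδ hc hf)

lemma lebDev_eq_zero_of_continuousAt {n : ℕ} {δ : ℝ} (hδ : 0 < δ) {f : En n → ℝ} {x : En n}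
    (hf : ContinuousAt f x) : lebDev n δ f x = 0 := by
  refine nonpos_iff_eq_zero.1 (ENNReal.le_of_forall_pos_le_add fun ε hε _ => ?_)
  obtain ⟨d, hd, hdist⟩ := Metric.continuousAt_iff.1 hf ε hε
  rw [zero_add, ← ENNReal.ofReal_coe_nnreal]
  refine limsup_le_of_le (by isBoundedDefault) ?_
  filter_upwards [Ioo_mem_nhdsGT hd] with r hr
  refine ballAvg_le_of_forall_le hδ ε.coe_nonneg fun y hy => ENNReal.ofReal_le_ofReal ?_
  exact (hdist ((mem_ball.1 hy).trans hr.2)).le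

lemma dyadicContent_lebDev_ne_zero_of_continuous {n : ℕ} {δ : ℝ} (hδ : 0 < δ) {f : En n → ℝ}
    (hf : Continuous f) : dyadicContent n δ {x | lebDev n δ f x ≠ 0} = 0 := by
  simp only [lebDev_eq_zero_of_continuousAt hδ hf.continuousAt, ne_eq, not_true_eq_false,
    ofPred_false, dyadicContent_empty hδ]

lemma ballAvg_abs_sub_le {n : ℕ} {δ : ℝ} (hδ : 0 < δ) (f φ : En n → ℝ) (x : En n) {r : ℝ}
    (hr : 0 < r) :
    ballAvg n δ (fun y => ENNReal.ofReal |f y - f x|) x r ≤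
      4 * (maximal n δ (fun y => ENNReal.ofReal |f y - φ y|) x + ENNReal.ofReal |f x - φ x| +
        ballAvg n δ (fun y => ENNReal.ofReal |φ y - φ x|) x r) := by
  set g : En n → ℝ≥0∞ := fun y => ENNReal.ofReal |f y - φ y|
  set G : En n → ℝ≥0∞ := fun y => ENNReal.ofReal |φ y - φ x|
  have hpoint : (fun y => ENNReal.ofReal |f y - f x|) ≤ g + ((fun _ => g x) + G) := by
    intro y
    simp only [Pi.add_apply, g, G, ← Real.enorm_eq_ofReal_abs]
    calc ‖f y - f x‖ₑ = ‖(f y - φ y) + ((φ x - f x) + (φ y - φ x))‖ₑ := by ring_nf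
      _ ≤ ‖f y - φ y‖ₑ + (‖φ x - f x‖ₑ + ‖φ y - φ x‖ₑ) :=
          (enorm_add_le _ _).trans (by gcongr; exact enorm_add_le _ _)
      _ = ‖f y - φ y‖ₑ + (‖f x - φ x‖ₑ + ‖φ y - φ x‖ₑ) := by rw [← enorm_neg (φ x - f x), neg_sub]
  calc ballAvg n δ (fun y => ENNReal.ofReal |f y - f x|) x r
      ≤ ballAvg n δ (g + ((fun _ => g x) + G)) x r := ballAvg_mono hpoint x r
    _ ≤ 2 * (ballAvg n δ g x r + 2 * (ballAvg n δ (fun _ => g x) x r + ballAvg n δ G x r)) :=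
        (ballAvg_add_le hδ _ _ x r).trans (by gcongr; exact ballAvg_add_le hδ _ _ x r)
    _ ≤ 2 * (2 * maximal n δ g x + 2 * (g x + ballAvg n δ G x r)) := by
        gcongr
        · exact (ballAvg_le_maximal g x hr).trans (le_mul_of_one_le_left' one_le_two)
        · exact ballAvg_le_of_forall_le hδ (abs_nonneg _) fun _ _ => le_rfl
    _ = 4 * (maximal n δ g x + g x + ballAvg n δ G x r) := by ring

lemma lebDev_le {n : ℕ} {δ : ℝ} (hδ : 0 < δ) (f φ : En n → ℝ) (x : En n) :
    lebDev n δ f x ≤ 4 * (maximal n δ (fun y => ENNReal.ofReal |f y - φ y|) x +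
      ENNReal.ofReal |f x - φ x| + lebDev n δ φ x) := by
  set a := maximal n δ (fun y => ENNReal.ofReal |f y - φ y|) x + ENNReal.ofReal |f x - φ x|
  calc lebDev n δ f x
      ≤ limsup (fun r => 4 * (a + ballAvg n δ (fun y => ENNReal.ofReal |φ y - φ x|) x r))
          (𝓝[>] 0) :=
        limsup_le_limsup (eventually_mem_nhdsWithin.mono fun _ => ballAvg_abs_sub_le hδ f φ x)
    _ = 4 * (a + lebDev n δ φ x) := by
        rw [ENNReal.limsup_const_mul_of_ne_top ENNReal.ofNat_ne_top,
          limsup_const_add _ _ _ (by isBoundedDefault) (by isBoundedDefault)]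
        rfl

lemma exists_mul_dyadicContent_lebDev_le {n : ℕ} {δ : ℝ} (hδ : 0 < δ) (hδn : δ ≤ n) :
    ∃ C : ℝ≥0∞, C ≠ ⊤ ∧ ∀ (f φ : En n → ℝ) (t : ℝ), 0 < t →
      dyadicContent n δ {x | lebDev n δ φ x ≠ 0} = 0 →
      choquetIntegralAbs n δ univ (fun x => f x - φ x) ≠ ⊤ →
      ENNReal.ofReal t * dyadicContent n δ {x | 8 * ENNReal.ofReal t < lebDev n δ f x} ≤
        C * choquetIntegralAbs n δ univ fun x => f x - φ x := by
  obtain ⟨C, hC, hmax⟩ := exists_mul_dyadicContent_maximal_le hδ hδn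
  refine ⟨C + 1, by finiteness, fun f φ t ht hφ hfin => ?_⟩
  set g : En n → ℝ≥0∞ := fun x => ENNReal.ofReal |f x - φ x|
  have hsub : {x | 8 * ENNReal.ofReal t < lebDev n δ f x} ⊆
      {x | ENNReal.ofReal t < maximal n δ g x} ∪ {x | x ∈ univ ∧ ENNReal.ofReal t < g x} ∪
        {x | lebDev n δ φ x ≠ 0} := by
    rintro x (hx : 8 * ENNReal.ofReal t < lebDev n δ f x)
    by_contra hnot
    simp only [mem_union, mem_ofPred_eq, mem_univ, true_and, not_or, not_lt, not_not] at hnot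
    obtain ⟨⟨hxmax, hxg⟩, hxφ⟩ := hnot
    refine hx.not_ge ((lebDev_le hδ f φ x).trans ?_)
    calc 4 * (maximal n δ g x + g x + lebDev n δ φ x)
        ≤ 4 * (ENNReal.ofReal t + ENNReal.ofReal t + 0) := by gcongr; exact hxφ.le
      _ = 8 * ENNReal.ofReal t := by ring
  calc ENNReal.ofReal t * dyadicContent n δ {x | 8 * ENNReal.ofReal t < lebDev n δ f x}
      ≤ ENNReal.ofReal t * (dyadicContent n δ {x | ENNReal.ofReal t < maximal n δ g x} +
          dyadicDistribution n δ univ g t + dyadicContent n δ {x | lebDev n δ φ x ≠ 0}) := by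
        gcongr
        refine (dyadicContent_mono hsub).trans ?_
        refine (measure_union_le (μ := dyadicOuterMeasure n hδ) _ _).trans ?_
        gcongr
        · exact measure_union_le (μ := dyadicOuterMeasure n hδ) _ _
        · exact le_rfl
    _ = ENNReal.ofReal t * dyadicContent n δ {x | ENNReal.ofReal t < maximal n δ g x} +
          ENNReal.ofReal t * dyadicDistribution n δ univ g t := by rw [hφ, add_zero, mul_add]
    _ ≤ C * choquetIntegral n δ univ g + choquetIntegral n δ univ g :=
        add_le_add (hmax g t ht hfin) (ofReal_mul_dyadicDistribution_le ht)
    _ = (C + 1) * choquetIntegral n δ univ g := by rw [add_mul, one_mul]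

theorem lebesgue_points_of_nL1_limit_general {n : ℕ} {δ : ℝ} (hδ : 0 < δ) (hδn : δ ≤ n)
    {ι : Type*} {l : Filter ι} [l.NeBot] {f : En n → ℝ} {φ : ι → En n → ℝ}
    (hφ : ∀ i, dyadicContent n δ {x | lebDev n δ (φ i) x ≠ 0} = 0)
    (hlim : Tendsto (fun i => choquetIntegralAbs n δ univ fun x => f x - φ i x) l (𝓝 0)) :
    dyadicContent n δ {x | lebDev n δ f x ≠ 0} = 0 := by
  obtain ⟨C, hC, hweak⟩ := exists_mul_dyadicContent_lebDev_le hδ hδn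
  have hnull (t : ℝ) (ht : 0 < t) :
      dyadicContent n δ {x | 8 * ENNReal.ofReal t < lebDev n δ f x} = 0 := by
    have hle : ENNReal.ofReal t * dyadicContent n δ {x | 8 * ENNReal.ofReal t < lebDev n δ f x} ≤
        C * 0 := by
      refine ge_of_tendsto (ENNReal.Tendsto.const_mul hlim (Or.inr hC)) ?_
      filter_upwards [hlim.eventually (gt_mem_nhds ENNReal.zero_lt_top)] with i hi
      exact hweak f (φ i) t ht (hφ i) hi.ne
    rw [mul_zero, nonpos_iff_eq_zero, mul_eq_zero] at hle
    exact hle.resolve_left (ENNReal.ofReal_pos.2 ht).ne'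
  obtain ⟨u, -, hu_pos, hu⟩ := exists_seq_strictAnti_tendsto (0 : ℝ)
  have hu' : Tendsto (fun m => 8 * ENNReal.ofReal (u m)) atTop (𝓝 0) := by
    simpa using ENNReal.Tendsto.const_mul (ENNReal.tendsto_ofReal hu)
      (Or.inr (ENNReal.ofNat_ne_top (n := 8)))
  have hsub : {x | lebDev n δ f x ≠ 0} ⊆ ⋃ m, {x | 8 * ENNReal.ofReal (u m) < lebDev n δ f x} :=
    fun x hx => mem_iUnion.2 (hu'.eventually (gt_mem_nhds (pos_iff_ne_zero.2 hx))).exists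
  exact measure_mono_null (μ := dyadicOuterMeasure n hδ) hsub
    (measure_iUnion_null fun m => hnull (u m) (hu_pos m))

/-- if `f ∈ nL¹(ℝⁿ, H̃^δ_∞)` is an `nL¹`-limit of continuous functions,
then `H̃^δ_∞`-almost every point is a Lebesgue point: `f^δ_*(x) = 0` a.e. -/
theorem lebesgue_points_of_nL1_limit (n : ℕ) (hn : 1 ≤ n)
    (δ : ℝ) (hδ0 : 0 < δ) (hδn : δ ≤ n)
    (f : En n → ℝ) (hf : choquetIntegralAbs n δ univ f < ⊤)
    (hlimit : ∃ φ : ℕ → En n → ℝ, (∀ i, Continuous (φ i)) ∧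
      Tendsto (fun i => choquetIntegralAbs n δ univ (fun x => f x - φ i x))
        atTop (𝓝 0)) :
    ∃ E : Set (En n), dyadicContent n δ E = 0 ∧
      ∀ x ∉ E, lebDev n δ f x = 0 := by
  obtain ⟨φ, hφ, hlim⟩ := hlimit
  exact ⟨{x | lebDev n δ f x ≠ 0}, lebesgue_points_of_nL1_limit_general hδ0 hδn
    (fun i => dyadicContent_lebDev_ne_zero_of_continuous hδ0 (hφ i)) hlim, fun x hx => not_not.1 hx⟩
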